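/- For p > 0 let Z_p := (A_1^{p/2} A_2^{p/2} ⋯ A_{m-1}^{p/2} A_m^p A_{m-1}^{p/2} ⋯ A_2^{p/2} A_1^{p/2})^{1/p} and let λ_1(p) ≥ … ≥ λ_d(p) be its eigenvalues in decreasing order with multiplicities. Then for every i = 1, …, d the limit λ_i := lim_{p→∞} λ_i(p) exists. -/

import Mathlib

open Matrix Filter Topology Finset
open scoped ComplexOrder

/-- Functional-calculus power of a (Hermitian, in practice positive semidefinite)
matrix, with the convention `0 ^ r = 0` for `r > 0`. -/
noncomputable def psdPow {d : ℕ} (A : Matrix (Fin d) (Fin d) ℂ) (r : ℝ) :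
    Matrix (Fin d) (Fin d) ℂ :=
  if hA : A.IsHermitian then
    (hA.eigenvectorUnitary : Matrix (Fin d) (Fin d) ℂ) *
      Matrix.diagonal (fun i => ((hA.eigenvalues i ^ r : ℝ) : ℂ)) *
      star (hA.eigenvectorUnitary : Matrix (Fin d) (Fin d) ℂ)
  else 0

/-- The eigenvalues of a Hermitian matrix, sorted in decreasing order
(with multiplicities). -/
noncomputable def eigsDesc {d : ℕ} (A : Matrix (Fin d) (Fin d) ℂ) : Fin d → ℝ :=
  if hA : A.IsHermitian then
    fun i => hA.eigenvalues (Tuple.sort hA.eigenvalues i.rev)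
  else 0

/-- For `n + 1` matrices `A_0, …, A_n`, this is
`Z_p = (A_0^{p/2} A_1^{p/2} ⋯ A_{n-1}^{p/2} A_n^p A_{n-1}^{p/2} ⋯ A_1^{p/2} A_0^{p/2})^{1/p}`. -/
noncomputable def ZmatM {d n : ℕ} (A : Fin (n + 1) → Matrix (Fin d) (Fin d) ℂ)
    (p : ℝ) : Matrix (Fin d) (Fin d) ℂ :=
  psdPow ((List.ofFn fun l : Fin n => psdPow (A l.castSucc) (p / 2)).prod *
    psdPow (A (Fin.last n)) p *
    ((List.ofFn fun l : Fin n => psdPow (A l.castSucc) (p / 2)).reverse).prod) (1 / p)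

/-! Write `Z_p = W_p ^ (1 / p)`. The entries of `W_p` are finite exponential sums `∑ c_x e^{p x}`,
hence so are the coefficients of its characteristic polynomial, and those are up to sign the
elementary symmetric functions of `λ_1(p)^p, …, λ_d(p)^p`. The `p`-th root of the modulus of an
exponential sum converges, to `e^m` for its largest frequency `m`. The `k`-th elementary symmetric
function of nonnegative numbers lies between its largest term and `d.choose k` times that term, a
constant factor that disappears under the `p`-th root, so `λ_1(p) ⋯ λ_k(p)` converges for every `k`.
Successive quotients then give the limits of the `λ_i(p)`; once a product tends to `0`, so does its
smallest factor and every later eigenvalue. -/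

section ExponentialSums

variable {R : Type*}

/-- Evaluation at `p` of a formal exponential sum: an element `∑ c_x [x]` of the group algebra of
`ℝ` is read as the function `p ↦ ∑ c_x e^{p x}`. -/
noncomputable def expSumEval [CommSemiring R] [Algebra ℝ R] (p : ℝ) :
    AddMonoidAlgebra R ℝ →+* R :=
  (AddMonoidAlgebra.lift R R ℝ
    ((algebraMap ℝ R : ℝ →* R).comp
      { toFun := fun x => Real.exp (p * x.toAdd)
        map_one' := by simp
        map_mul' := fun x y => by rw [toAdd_mul, mul_add, Real.exp_add] })).toRingHom

lemma expSumEval_single [CommSemiring R] [Algebra ℝ R] (p x : ℝ) (c : R) :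
    expSumEval p (AddMonoidAlgebra.single x c) = Real.exp (p * x) • c := by
  simp [expSumEval, Algebra.smul_def, mul_comm]

lemma expSumEval_apply [CommSemiring R] [Algebra ℝ R] (p : ℝ) (f : AddMonoidAlgebra R ℝ) :
    expSumEval p f = ∑ x ∈ f.coeff.support, Real.exp (p * x) • f.coeff x := by
  simp [expSumEval, AddMonoidAlgebra.lift_apply, Finsupp.sum, Algebra.smul_def, mul_comm]

variable [NormedCommRing R] [NormedAlgebra ℝ R]

lemma tendsto_exp_neg_smul_expSumEval (f : AddMonoidAlgebra R ℝ) (hf : f.coeff.support.Nonempty) :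
    Tendsto (fun p => Real.exp (-(p * f.coeff.support.max' hf)) • expSumEval p f) atTop
      (𝓝 (f.coeff (f.coeff.support.max' hf))) := by
  set m := f.coeff.support.max' hf
  have hterm : ∀ x ∈ f.coeff.support, Tendsto (fun p => Real.exp (p * (x - m)) • f.coeff x) atTop
      (𝓝 (if x = m then f.coeff x else 0)) := by
    intro x hx
    rcases (f.coeff.support.le_max' x hx).eq_or_lt with hxm | hlt
    · simp [show x = m from hxm]
    · have hexp : Tendsto (fun p => Real.exp (p * (x - m))) atTop (𝓝 0) :=
        Real.tendsto_exp_atBot.comp (tendsto_id.atTop_mul_const_of_neg (sub_neg.mpr hlt))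
      simpa [hlt.ne, m] using hexp.smul_const (f.coeff x)
  have hsum := tendsto_finsetSum _ hterm
  rw [Finset.sum_ite_eq', if_pos (f.coeff.support.max'_mem hf)] at hsum
  refine hsum.congr fun p => ?_
  rw [expSumEval_apply, Finset.smul_sum]
  refine Finset.sum_congr rfl fun x _ => ?_
  rw [smul_smul, ← Real.exp_add]
  ring_nf

lemma tendsto_norm_expSumEval_rpow_inv (f : AddMonoidAlgebra R ℝ)
    (hf : f.coeff.support.Nonempty) :
    Tendsto (fun p => ‖expSumEval p f‖ ^ p⁻¹) atTop
      (𝓝 (Real.exp (f.coeff.support.max' hf))) := by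
  set m := f.coeff.support.max' hf
  have hlead : ‖f.coeff m‖ ≠ 0 :=
    norm_ne_zero_iff.mpr (Finsupp.mem_support_iff.mp (f.coeff.support.max'_mem hf))
  have hroot := ((tendsto_exp_neg_smul_expSumEval f hf).norm.rpow tendsto_inv_atTop_zero
    (Or.inl hlead)).const_mul (Real.exp m)
  rw [Real.rpow_zero, mul_one] at hroot
  refine hroot.congr' ?_
  filter_upwards [eventually_ne_atTop 0] with p hp
  have hexp : Real.exp (-(p * m)) ^ p⁻¹ = (Real.exp m)⁻¹ := by
    rw [← Real.exp_mul, ← Real.exp_neg]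
    field_simp
  rw [norm_smul, Real.norm_eq_abs, Real.abs_exp,
    Real.mul_rpow (Real.exp_pos _).le (norm_nonneg _), hexp,
    mul_inv_cancel_left₀ (Real.exp_ne_zero m)]

lemma exists_tendsto_norm_expSumEval_rpow_inv (f : AddMonoidAlgebra R ℝ) :
    ∃ L, Tendsto (fun p => ‖expSumEval p f‖ ^ p⁻¹) atTop (𝓝 L) := by
  by_cases hf : f.coeff.support.Nonempty
  · exact ⟨_, tendsto_norm_expSumEval_rpow_inv f hf⟩
  · refine ⟨0, tendsto_const_nhds.congr' ?_⟩
    filter_upwards [eventually_ne_atTop 0] with p hp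
    rw [expSumEval_apply, Finset.not_nonempty_iff_eq_empty.mp hf, Finset.sum_empty, norm_zero,
      Real.zero_rpow (inv_ne_zero hp)]

end ExponentialSums

lemma list_map_prod_mem_of_forall_mem {ι κ M : Type*} [Monoid M] {S : Submonoid (ι → M)}
    {L : List κ} {W : κ → ι → M} (hW : ∀ l ∈ L, W l ∈ S) :
    (fun p => (L.map fun l => W l p).prod) ∈ S := by
  have hprod : (L.map W).prod ∈ S := S.list_prod_mem (by simpa using hW)
  convert hprod using 1
  ext1 p
  simpa [Function.comp_def] using
    (map_list_prod (Pi.evalMonoidHom (fun _ : ι => M) p) (L.map W)).symm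

section ExponentialSumMatrices

variable {m R : Type*} [Fintype m] [DecidableEq m] [CommRing R] [Algebra ℝ R]

variable (m R) in
/-- The ring of matrix-valued functions of `p` whose entries are, for all large `p`, finite
exponential sums `∑ c_x e^{p x}`. Only germs at `∞` are constrained, because the function
`p ↦ 0 ^ p` is an exponential sum everywhere except at `p = 0`. -/
noncomputable def expSumMatrices : Subring (ℝ → Matrix m m R) :=
  ((Germ.coeRingHom atTop).comp
    (RingHom.pi fun p : ℝ => (expSumEval (R := R) p).mapMatrix (m := m))).range.comap
      (Germ.coeRingHom atTop)

lemma mem_expSumMatrices {W : ℝ → Matrix m m R} :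
    W ∈ expSumMatrices m R ↔
      ∃ M : Matrix m m (AddMonoidAlgebra R ℝ), ∀ᶠ p in atTop, M.map (expSumEval p) = W p := by
  simp only [expSumMatrices, Subring.mem_comap, RingHom.mem_range]
  exact exists_congr fun M => Germ.coe_eq

lemma const_mem_expSumMatrices (B : Matrix m m R) :
    (fun _ => B) ∈ expSumMatrices m R :=
  mem_expSumMatrices.mpr ⟨B.map (AddMonoidAlgebra.single 0), .of_forall fun p => by
    ext i j
    simp [expSumEval_single]⟩

lemma diagonal_mem_expSumMatrices {v : ℝ → m → R}
    (hv : ∀ i, ∃ f, ∀ᶠ p in atTop, expSumEval p f = v p i) :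
    (fun p => diagonal (v p)) ∈ expSumMatrices m R := by
  choose f hf using hv
  refine mem_expSumMatrices.mpr ⟨diagonal f, ?_⟩
  filter_upwards [eventually_all.mpr hf] with p hp
  rw [diagonal_map (map_zero _)]
  exact congrArg diagonal (funext hp)

lemma exists_expSumEval_eq_coeff_charpoly {W : ℝ → Matrix m m R} (hW : W ∈ expSumMatrices m R)
    (k : ℕ) :
    ∃ f, ∀ᶠ p in atTop, expSumEval p f = (W p).charpoly.coeff k := by
  obtain ⟨M, hM⟩ := mem_expSumMatrices.mp hW
  refine ⟨M.charpoly.coeff k, ?_⟩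
  filter_upwards [hM] with p hp
  rw [← hp, charpoly_map, Polynomial.coeff_map]

lemma exists_expSumEval_eq_rpow {a t : ℝ} (ha : 0 ≤ a) (ht : t ≠ 0) :
    ∃ f : AddMonoidAlgebra R ℝ,
      ∀ᶠ p in atTop, expSumEval p f = algebraMap ℝ R (a ^ (t * p)) := by
  rcases ha.eq_or_lt with rfl | ha
  · refine ⟨0, ?_⟩
    filter_upwards [eventually_ne_atTop 0] with p hp
    rw [Real.zero_rpow (mul_ne_zero ht hp), map_zero, map_zero]
  · refine ⟨AddMonoidAlgebra.single (t * Real.log a) 1, .of_forall fun p => ?_⟩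
    rw [expSumEval_single, Real.rpow_def_of_pos ha, Algebra.algebraMap_eq_smul_one]
    ring_nf

end ExponentialSumMatrices

section ElementarySymmetric

variable {d k : ℕ}

lemma val_le_val_of_strictMono {f : Fin k → Fin d} (hf : StrictMono f) (j : Fin k) :
    (j : ℕ) ≤ f j := by
  simpa using card_le_card_of_injOn f (s := Iio j) (t := Iio (f j))
    (fun i hi => by simpa using hf (by simpa using hi)) hf.injective.injOn

variable {R : Type*} [CommSemiring R] [PartialOrder R] [IsOrderedRing R] {v : Fin d → R}

lemma prod_le_prod_castLE_of_antitone (hk : k ≤ d) (hv : Antitone v) (h0 : ∀ i, 0 ≤ v i)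
    {s : Finset (Fin d)} (hs : #s = k) :
    ∏ i ∈ s, v i ≤ ∏ j : Fin k, v (Fin.castLE hk j) := by
  rw [← s.map_orderEmbOfFin_univ hs, prod_map]
  exact prod_le_prod (fun _ _ => h0 _) fun j _ =>
    hv (val_le_val_of_strictMono (s.orderEmbOfFin hs).strictMono j)

lemma prod_castLE_le_esymm (hk : k ≤ d) (h0 : ∀ i, 0 ≤ v i) :
    ∏ j : Fin k, v (Fin.castLE hk j) ≤ (univ.val.map v).esymm k := by
  have hmem : univ.map (Fin.castLEEmb hk) ∈ powersetCard k univ := by simp [mem_powersetCard]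
  rw [esymm_map_val]
  simpa using
    single_le_sum (f := fun s => ∏ i ∈ s, v i) (fun s _ => prod_nonneg fun i _ => h0 i) hmem

lemma esymm_le_choose_mul_prod_castLE (hk : k ≤ d) (hv : Antitone v) (h0 : ∀ i, 0 ≤ v i) :
    (univ.val.map v).esymm k ≤ d.choose k * ∏ j : Fin k, v (Fin.castLE hk j) := by
  rw [esymm_map_val]
  simpa using sum_le_card_nsmul (powersetCard k univ) (fun s => ∏ i ∈ s, v i) _
    fun s hs => prod_le_prod_castLE_of_antitone hk hv h0 (mem_powersetCard.mp hs).2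

lemma pow_le_prod_castLE_of_antitone (hv : Antitone v) (h0 : ∀ i, 0 ≤ v i) (i : Fin d) :
    v i ^ (i : ℕ) ≤ ∏ j : Fin i, v (Fin.castLE i.isLt.le j) := by
  simpa using prod_le_prod (s := univ) (fun _ _ => h0 i)
    fun (j : Fin i) _ => hv (a := Fin.castLE i.isLt.le j) (b := i) (Fin.le_def.mpr j.isLt.le)

lemma prod_castLE_succ {M : Type*} [CommMonoid M] (v : Fin d → M) (i : Fin d) :
    ∏ j : Fin (i + 1), v (Fin.castLE i.isLt j) =
      (∏ j : Fin i, v (Fin.castLE i.isLt.le j)) * v i :=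
  Fin.prod_univ_castSucc _

end ElementarySymmetric

section Limits

lemma exists_tendsto_apply_of_exists_tendsto_prod_castLE {ι : Type*} {l : Filter ι} [l.NeBot]
    {d : ℕ} {v : ι → Fin d → ℝ} (hv : ∀ᶠ p in l, Antitone (v p)) (h0 : ∀ᶠ p in l, ∀ i, 0 ≤ v p i)
    (hprod : ∀ k, ∀ hk : k ≤ d,
      ∃ L, Tendsto (fun p => ∏ j : Fin k, v p (Fin.castLE hk j)) l (𝓝 L)) (i : Fin d) :
    ∃ a, Tendsto (fun p => v p i) l (𝓝 a) := by
  obtain ⟨L, hL⟩ := hprod i i.isLt.le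
  obtain ⟨L', hL'⟩ := hprod (i + 1) i.isLt
  rcases eq_or_ne L 0 with rfl | hL0
  · have hi : (i : ℕ) ≠ 0 := by
      intro hi
      have hone : ∀ p, ∏ j : Fin i, v p (Fin.castLE i.isLt.le j) = 1 := fun p =>
        prod_eq_one fun j _ => absurd j.isLt (by omega)
      exact one_ne_zero (tendsto_nhds_unique (tendsto_const_nhds.congr fun p => (hone p).symm) hL)
    have hpow : Tendsto (fun p => v p i ^ (i : ℕ)) l (𝓝 0) :=
      squeeze_zero' (h0.mono fun p hp => pow_nonneg (hp i) _)
        (by filter_upwards [hv, h0] with p hvp h0p using pow_le_prod_castLE_of_antitone hvp h0p i)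
        hL
    have hroot := hpow.rpow_const (p := ((i : ℕ) : ℝ)⁻¹) (Or.inr (by positivity))
    rw [Real.zero_rpow (by positivity)] at hroot
    exact ⟨0, hroot.congr' (h0.mono fun p hp => Real.pow_rpow_inv_natCast (hp i) hi)⟩
  · refine ⟨L' / L, (hL'.div hL hL0).congr' ?_⟩
    filter_upwards [hL.eventually_ne hL0] with p hp
    rw [Pi.div_apply, prod_castLE_succ, mul_div_cancel_left₀ _ hp]

lemma tendsto_rpow_inv_of_le_of_le_mul {f g : ℝ → ℝ} {C L : ℝ} (hC : 0 < C)
    (hf : ∀ᶠ p in atTop, 0 ≤ f p) (hfg : ∀ᶠ p in atTop, f p ≤ g p)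
    (hgf : ∀ᶠ p in atTop, g p ≤ C * f p) (hg : Tendsto (fun p => g p ^ p⁻¹) atTop (𝓝 L)) :
    Tendsto (fun p => f p ^ p⁻¹) atTop (𝓝 L) := by
  have hCinv : Tendsto (fun p : ℝ => C⁻¹ ^ p⁻¹) atTop (𝓝 1) := by
    simpa using tendsto_const_nhds.rpow tendsto_inv_atTop_zero (Or.inl (inv_ne_zero hC.ne'))
  have hlow : Tendsto (fun p => C⁻¹ ^ p⁻¹ * g p ^ p⁻¹) atTop (𝓝 L) := by
    simpa using hCinv.mul hg
  refine tendsto_of_tendsto_of_tendsto_of_le_of_le' hlow hg ?_ ?_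
  · filter_upwards [eventually_gt_atTop 0, hf, hfg, hgf] with p hp hfp hfgp hgfp
    have hgp : 0 ≤ g p := hfp.trans hfgp
    rw [← Real.mul_rpow (by positivity) hgp]
    exact Real.rpow_le_rpow (by positivity) ((inv_mul_le_iff₀ hC).mpr hgfp) (by positivity)
  · filter_upwards [eventually_gt_atTop 0, hf, hfg] with p hp hfp hfgp
    exact Real.rpow_le_rpow hfp hfgp (by positivity)

end Limits

section HermitianMatrices

variable {m 𝕜 : Type*} [Fintype m] [DecidableEq m] [RCLike 𝕜] {B : Matrix m m 𝕜}

lemma map_eigenvalues_cfc (hB : B.IsHermitian) (f : ℝ → ℝ) (hfB : (cfc f B).IsHermitian) :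
    univ.val.map hfB.eigenvalues = univ.val.map (f ∘ hB.eigenvalues) := by
  apply Multiset.map_injective (RCLike.ofReal_injective (K := 𝕜))
  rw [Multiset.map_map, ← hfB.roots_charpoly_eq_eigenvalues, hB.charpoly_cfc_eq,
    Polynomial.roots_prod _ _ (prod_ne_zero_iff.mpr fun i _ => Polynomial.X_sub_C_ne_zero _)]
  simp

lemma esymm_eigenvalues_eq_coeff_charpoly (hB : B.IsHermitian) {k : ℕ}
    (hk : k ≤ Fintype.card m) :
    (((univ.val.map hB.eigenvalues).esymm k : ℝ) : 𝕜) =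
      (-1) ^ k * B.charpoly.coeff (Fintype.card m - k) := by
  have hvieta := Multiset.prod_X_sub_C_coeff
    (univ.val.map (RCLike.ofReal (K := 𝕜) ∘ hB.eigenvalues)) (k := Fintype.card m - k) (by simp)
  have hcard : Fintype.card m - (Fintype.card m - k) = k := by omega
  rw [Multiset.map_map, Multiset.card_map, card_val, card_univ, hcard, esymm_map_val] at hvieta
  rw [hB.charpoly_eq, esymm_map_val]
  refine Eq.trans ?_ (congrArg _ hvieta.symm)
  rw [← mul_assoc, ← mul_pow]
  simp

lemma posSemidef_prod_mul_mul_prod_reverse {L : List (Matrix m m 𝕜)}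
    (hL : ∀ P ∈ L, P.IsHermitian) (hB : B.PosSemidef) :
    (L.prod * B * L.reverse.prod).PosSemidef := by
  have hstar : L.prodᴴ = L.reverse.prod := by
    rw [conjTranspose_list_prod, List.map_congr_left (g := id) hL, List.map_id]
  rw [← hstar]
  exact hB.mul_mul_conjTranspose_same _

end HermitianMatrices

lemma eq_of_antitone_of_map_univ_eq {α : Type*} [PartialOrder α] {d : ℕ} {f g : Fin d → α}
    (hf : Antitone f) (hg : Antitone g) (hfg : univ.val.map f = univ.val.map g) : f = g := by
  rw [Fin.univ_val_map, Fin.univ_val_map, Multiset.coe_eq_coe] at hfg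
  exact List.ofFn_injective
    (hfg.eq_of_pairwise' hf.sortedGE_ofFn.pairwise hg.sortedGE_ofFn.pairwise)

section PowersAndEigenvalues

variable {d : ℕ} {A : Matrix (Fin d) (Fin d) ℂ}

lemma psdPow_eq_cfc (hA : A.IsHermitian) (r : ℝ) : psdPow A r = cfc (fun x : ℝ => x ^ r) A := by
  rw [psdPow, dif_pos hA, hA.cfc_eq]
  rfl

lemma posSemidef_psdPow (hA : A.PosSemidef) (r : ℝ) : (psdPow A r).PosSemidef := by
  rw [psdPow, dif_pos hA.1, star_eq_conjTranspose]
  refine PosSemidef.mul_mul_conjTranspose_same (posSemidef_diagonal_iff.mpr fun i => ?_) _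
  exact_mod_cast Real.rpow_nonneg (hA.eigenvalues_nonneg i) r

lemma psdPow_mem_expSumMatrices (hA : A.PosSemidef) {t : ℝ} (ht : t ≠ 0) :
    (fun p => psdPow A (t * p)) ∈ expSumMatrices (Fin d) ℂ := by
  simp only [psdPow, dif_pos hA.1]
  exact mul_mem (mul_mem (const_mem_expSumMatrices _) (diagonal_mem_expSumMatrices fun i =>
    exists_expSumEval_eq_rpow (hA.eigenvalues_nonneg i) ht)) (const_mem_expSumMatrices _)

lemma antitone_eigsDesc (A : Matrix (Fin d) (Fin d) ℂ) : Antitone (eigsDesc A) := by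
  rw [eigsDesc]
  split_ifs with hA
  · exact fun i j hij => Tuple.monotone_sort hA.eigenvalues (Fin.rev_le_rev.mpr hij)
  · exact antitone_const

lemma eigsDesc_nonneg (hA : A.PosSemidef) (i : Fin d) : 0 ≤ eigsDesc A i := by
  rw [eigsDesc, dif_pos hA.1]
  exact hA.eigenvalues_nonneg _

lemma map_eigsDesc (hA : A.IsHermitian) :
    univ.val.map (eigsDesc A) = univ.val.map hA.eigenvalues := by
  rw [eigsDesc, dif_pos hA]
  conv_rhs => rw [← Multiset.map_univ_val_equiv (Fin.revPerm.trans (Tuple.sort hA.eigenvalues)),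
      Multiset.map_map]
  rfl

lemma eigsDesc_psdPow (hA : A.PosSemidef) {r : ℝ} (hr : 0 ≤ r) :
    eigsDesc (psdPow A r) = fun i => eigsDesc A i ^ r := by
  have hanti : Antitone fun i => eigsDesc A i ^ r := fun i j hij =>
    Real.rpow_le_rpow (eigsDesc_nonneg hA j) (antitone_eigsDesc A hij) hr
  refine eq_of_antitone_of_map_univ_eq (antitone_eigsDesc _) hanti ?_
  have hpow := (posSemidef_psdPow hA r).1
  rw [map_eigsDesc hpow]
  simp only [psdPow_eq_cfc hA.1] at hpow ⊢
  rw [map_eigenvalues_cfc hA.1 _ hpow]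
  simpa only [Multiset.map_map, Function.comp_def] using
    congrArg (Multiset.map (· ^ r)) (map_eigsDesc hA.1).symm

lemma esymm_eigsDesc_eq_norm_coeff_charpoly (hA : A.PosSemidef) {k : ℕ} (hk : k ≤ d) :
    (univ.val.map (eigsDesc A)).esymm k = ‖A.charpoly.coeff (d - k)‖ := by
  have hnonneg : 0 ≤ (univ.val.map (eigsDesc A)).esymm k := by
    rw [esymm_map_val]
    exact sum_nonneg fun s _ => prod_nonneg fun i _ => eigsDesc_nonneg hA i
  rw [map_eigsDesc hA.1] at hnonneg ⊢
  have hcoeff := congrArg norm (esymm_eigenvalues_eq_coeff_charpoly hA.1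
    (hk.trans_eq (Fintype.card_fin d).symm))
  rwa [RCLike.norm_ofReal, abs_of_nonneg hnonneg, norm_mul, norm_pow, norm_neg, norm_one, one_pow,
    one_mul, Fintype.card_fin] at hcoeff

end PowersAndEigenvalues

section ExponentialFamilies

variable {d : ℕ} {W : ℝ → Matrix (Fin d) (Fin d) ℂ}

lemma exists_tendsto_prod_eigsDesc_rpow_inv (hW : W ∈ expSumMatrices (Fin d) ℂ)
    (hpsd : ∀ᶠ p in atTop, (W p).PosSemidef) {k : ℕ} (hk : k ≤ d) :
    ∃ L, Tendsto (fun p => (∏ j : Fin k, eigsDesc (W p) (Fin.castLE hk j)) ^ p⁻¹) atTop (𝓝 L) := by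
  obtain ⟨f, hf⟩ := exists_expSumEval_eq_coeff_charpoly hW (d - k)
  obtain ⟨L, hL⟩ := exists_tendsto_norm_expSumEval_rpow_inv f
  have hesymm : Tendsto (fun p => (univ.val.map (eigsDesc (W p))).esymm k ^ p⁻¹) atTop (𝓝 L) := by
    refine hL.congr' ?_
    filter_upwards [hf, hpsd] with p hfp hp
    rw [hfp, esymm_eigsDesc_eq_norm_coeff_charpoly hp hk]
  refine ⟨L, tendsto_rpow_inv_of_le_of_le_mul (C := d.choose k)
    (by exact_mod_cast Nat.choose_pos hk) ?_ ?_ ?_ hesymm⟩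
  · exact hpsd.mono fun p hp => prod_nonneg fun j _ => eigsDesc_nonneg hp _
  · exact hpsd.mono fun p hp => prod_castLE_le_esymm hk (eigsDesc_nonneg hp)
  · exact hpsd.mono fun p hp =>
      esymm_le_choose_mul_prod_castLE hk (antitone_eigsDesc _) (eigsDesc_nonneg hp)

theorem exists_tendsto_eigsDesc_psdPow_inv (hW : W ∈ expSumMatrices (Fin d) ℂ)
    (hpsd : ∀ᶠ p in atTop, (W p).PosSemidef) (i : Fin d) :
    ∃ a, Tendsto (fun p => eigsDesc (psdPow (W p) p⁻¹) i) atTop (𝓝 a) := by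
  refine exists_tendsto_apply_of_exists_tendsto_prod_castLE
    (.of_forall fun p => antitone_eigsDesc _)
    (hpsd.mono fun p hp => eigsDesc_nonneg (posSemidef_psdPow hp _)) (fun k hk => ?_) i
  obtain ⟨L, hL⟩ := exists_tendsto_prod_eigsDesc_rpow_inv hW hpsd hk
  refine ⟨L, hL.congr' ?_⟩
  filter_upwards [hpsd, eventually_ge_atTop 0] with p hp hp0
  rw [eigsDesc_psdPow hp (inv_nonneg.mpr hp0),
    Real.finsetProd_rpow _ _ fun j _ => eigsDesc_nonneg hp _]

end ExponentialFamilies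

/-- For `n + 1` positive semidefinite matrices, every decreasingly-ordered eigenvalue
`λ_i(p)` of `Z_p = (A_0^{p/2} ⋯ A_{n-1}^{p/2} A_n^p A_{n-1}^{p/2} ⋯ A_0^{p/2})^{1/p}`
converges as `p → ∞`. -/
theorem anti_lie_trotter_multi_eigenvalue_limits_exist
    {d n : ℕ} (A : Fin (n + 1) → Matrix (Fin d) (Fin d) ℂ)
    (hA : ∀ l, (A l).PosSemidef) :
    ∀ i : Fin d, ∃ lam : ℝ,
      Tendsto (fun p : ℝ => eigsDesc (ZmatM A p) i) atTop (𝓝 lam) := by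
  have hside : ∀ l, (fun p => psdPow (A l) (p / 2)) ∈ expSumMatrices (Fin d) ℂ := fun l => by
    simpa [div_eq_inv_mul] using
      psdPow_mem_expSumMatrices (hA l) (inv_ne_zero two_ne_zero)
  have hmid : psdPow (A (Fin.last n)) ∈ expSumMatrices (Fin d) ℂ := by
    simpa using psdPow_mem_expSumMatrices (hA (Fin.last n)) one_ne_zero
  have hprod : ∀ L : List (Fin n), (fun p => (L.map fun l => psdPow (A l.castSucc) (p / 2)).prod) ∈
      expSumMatrices (Fin d) ℂ := fun L =>
    list_map_prod_mem_of_forall_mem (S := (expSumMatrices (Fin d) ℂ).toSubmonoid)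
      fun l _ => hside l.castSucc
  simp only [ZmatM, one_div, List.ofFn_eq_map, ← List.map_reverse]
  refine exists_tendsto_eigsDesc_psdPow_inv (mul_mem (mul_mem (hprod _) hmid) (hprod _))
    (.of_forall fun p => ?_)
  rw [List.map_reverse]
  refine posSemidef_prod_mul_mul_prod_reverse (fun P hP => ?_) (posSemidef_psdPow (hA _) p)
  obtain ⟨l, -, rfl⟩ := List.mem_map.mp hP
  exact (posSemidef_psdPow (hA _) _).1
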